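/- If the tit-for-tat strategy is suggested to both agents of the peer-to-peer setting, then the resulting pair of strategies is a Nash equilibrium: for each i ∈ {0,1} and every alternative strategy σ'ᵢ of Agent i, if the play determined by σ'ᵢ together with the tit-for-tat strategy of Agent 1−i satisfies Agent i's objective □◇(dᵢ ∧ u_{1−i}), then the play determined by both agents playing tit-for-tat also satisfies Agent i's objective. -/

import Mathlib

/-- `(hists σ₀ σ₁ k).1` (resp. `.2`) is the list of Agent 0's (resp. Agent 1's)
actions `(u, d)` at times `0, …, k-1` when Agent 0 plays strategy `σ₀` and
Agent 1 plays strategy `σ₁` (each strategy maps the other agent's past actions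
to the agent's current action). -/
def hists (σ₀ σ₁ : List (Bool × Bool) → Bool × Bool) :
    ℕ → List (Bool × Bool) × List (Bool × Bool)
  | 0 => ([], [])
  | k + 1 =>
    ((hists σ₀ σ₁ k).1 ++ [σ₀ (hists σ₀ σ₁ k).2],
     (hists σ₀ σ₁ k).2 ++ [σ₁ (hists σ₀ σ₁ k).1])

/-- Agent 0's action `(u₀(k), d₀(k))` in the play determined by `(σ₀, σ₁)`. -/
def act₀ (σ₀ σ₁ : List (Bool × Bool) → Bool × Bool) (k : ℕ) : Bool × Bool :=
  σ₀ (hists σ₀ σ₁ k).2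

/-- Agent 1's action `(u₁(k), d₁(k))` in the play determined by `(σ₀, σ₁)`. -/
def act₁ (σ₀ σ₁ : List (Bool × Bool) → Bool × Bool) (k : ℕ) : Bool × Bool :=
  σ₁ (hists σ₀ σ₁ k).1

/-- Agent 0's objective `□◇(d₀ ∧ u₁)` holds in the play determined by `(σ₀, σ₁)`. -/
def obj₀ (σ₀ σ₁ : List (Bool × Bool) → Bool × Bool) : Prop :=
  ∀ N : ℕ, ∃ k, N ≤ k ∧ (act₀ σ₀ σ₁ k).2 = true ∧ (act₁ σ₀ σ₁ k).1 = true

/-- Agent 1's objective `□◇(d₁ ∧ u₀)` holds in the play determined by `(σ₀, σ₁)`. -/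
def obj₁ (σ₀ σ₁ : List (Bool × Bool) → Bool × Bool) : Prop :=
  ∀ N : ℕ, ∃ k, N ≤ k ∧ (act₁ σ₀ σ₁ k).2 = true ∧ (act₀ σ₀ σ₁ k).1 = true

/-- The tit-for-tat strategy: always download (`d = true`); upload at time `0`,
and afterwards reciprocate the upload bit of the other agent's last action. -/
def tft : List (Bool × Bool) → Bool × Bool :=
  fun hist => ((hist.getLast?.map Prod.fst).getD true, true)

theorem hists_swap (σ₀ σ₁ : List (Bool × Bool) → Bool × Bool) (k : ℕ) :
    hists σ₁ σ₀ k = (hists σ₀ σ₁ k).swap := by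
  induction k with
  | zero => rfl
  | succ k ih => simp [hists, ih]

theorem act₁_swap (σ₀ σ₁ : List (Bool × Bool) → Bool × Bool) (k : ℕ) :
    act₁ σ₁ σ₀ k = act₀ σ₀ σ₁ k := by
  simp only [act₀, act₁, hists_swap σ₀ σ₁, Prod.fst_swap]

theorem obj₁_swap (σ₀ σ₁ : List (Bool × Bool) → Bool × Bool) :
    obj₁ σ₁ σ₀ ↔ obj₀ σ₀ σ₁ := by
  simp only [obj₀, obj₁, act₁_swap σ₀ σ₁, act₁_swap σ₁ σ₀]

theorem tft_concat (hist : List (Bool × Bool)) (a : Bool × Bool) :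
    tft (hist ++ [a]) = (a.1, true) := by
  simp [tft]

theorem act₀_tft_zero (σ₁ : List (Bool × Bool) → Bool × Bool) :
    act₀ tft σ₁ 0 = (true, true) :=
  rfl

theorem act₀_tft_succ (σ₁ : List (Bool × Bool) → Bool × Bool) (k : ℕ) :
    act₀ tft σ₁ (k + 1) = ((act₁ tft σ₁ k).1, true) :=
  tft_concat _ _

theorem act₀_tft_tft (k : ℕ) : act₀ tft tft k = (true, true) := by
  induction k with
  | zero => exact act₀_tft_zero tft
  | succ k ih => rw [act₀_tft_succ, act₁_swap, ih]

theorem obj₀_tft_tft : obj₀ tft tft := by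
  intro N
  refine ⟨N, le_rfl, ?_, ?_⟩
  · rw [act₀_tft_tft]
  · rw [act₁_swap, act₀_tft_tft]

theorem titForTat_nash_equilibrium_general : obj₀ tft tft ∧ obj₁ tft tft :=
  ⟨obj₀_tft_tft, (obj₁_swap tft tft).mpr obj₀_tft_tft⟩

/-- If the tit-for-tat strategy is suggested to both agents, the resulting pair
of strategies is a Nash equilibrium: no agent can gain by unilaterally
deviating. -/
theorem titForTat_nash_equilibrium :
    (∀ σ'₀ : List (Bool × Bool) → Bool × Bool,
        obj₀ σ'₀ tft → obj₀ tft tft) ∧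
    (∀ σ'₁ : List (Bool × Bool) → Bool × Bool,
        obj₁ tft σ'₁ → obj₁ tft tft) :=
  ⟨fun _ _ => titForTat_nash_equilibrium_general.1,
    fun _ _ => titForTat_nash_equilibrium_general.2⟩
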